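/- arXiv:1903.12154 — 8 statements merged into one kernel-verified Lean document; each statement's English description precedes it below -/
import Mathlib

section
/- For any two classical-device states P1 and P2 over the same finite sets B, A1, X1, the non-signaling norm distance has the closed form ||P1 - P2||_NS = (1/2) * sum over b in B of max over x1 in X1 of sum over a1 in A1 of |P1(b,a1|x1) - P2(b,a1|x1)|. -/
/-- A forward wiring (with its own dice) acting on the device part of a c-d state:
the dice has output set `Fin nA2`, input set `Fin nX2`; `f` feeds the device's output
and input into the dice input, `g` post-processes into the new output alphabet `A1'`. -/
structure FwdWire (A1 X1 A1' : Type) [Fintype A1] [Fintype X1] [Fintype A1'] where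
  nA2 : ℕ
  nX2 : ℕ
  D : Fin nA2 → Fin nX2 → ℝ
  D_nonneg : ∀ a2 x2, 0 ≤ D a2 x2
  D_sum : ∀ x2, ∑ a2, D a2 x2 = 1
  f : A1 → X1 → Fin nX2
  g : A1 → Fin nA2 → X1 → A1'

noncomputable def FwdWire.apply {A1 X1 A1' : Type} [Fintype A1] [Fintype X1] [Fintype A1']
    [DecidableEq A1'] (W : FwdWire A1 X1 A1') (Pb : A1 → X1 → ℝ) : A1' → X1 → ℝ :=
  fun a1' x1 => ∑ a1, ∑ a2, if W.g a1 a2 x1 = a1' then Pb a1 x1 * W.D a2 (W.f a1 x1) else 0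

/-- A backward wiring (with its own dice): the dice input set is `X1` itself,
its output is fed (via `f`) into the input of the device. -/
structure BackWire (A1 X1 A1' : Type) [Fintype A1] [Fintype X1] [Fintype A1'] where
  nA2 : ℕ
  D : Fin nA2 → X1 → ℝ
  D_nonneg : ∀ a2 x1, 0 ≤ D a2 x1
  D_sum : ∀ x1, ∑ a2, D a2 x1 = 1
  f : Fin nA2 → X1 → X1
  g : A1 → Fin nA2 → X1 → A1'

noncomputable def BackWire.apply {A1 X1 A1' : Type} [Fintype A1] [Fintype X1] [Fintype A1']
    [DecidableEq A1'] (W : BackWire A1 X1 A1') (Pb : A1 → X1 → ℝ) : A1' → X1 → ℝ :=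
  fun a1' x1 => ∑ a1, ∑ a2, if W.g a1 a2 x1 = a1' then Pb a1 (W.f a2 x1) * W.D a2 x1 else 0

/-- A pure distinguishing operation on c-d states over `B, A1, X1`, with output
alphabet `Fin nC`: for each `b` either a forward or a backward wiring, followed by a
general measurement `w b` (a distribution on the inputs `X1`) and a stochastic
post-processing `L` of `(b, a1')` into the final outcome `c`. -/
structure PureOp (B A1 X1 : Type) [Fintype B] [Fintype A1] [Fintype X1] (nC : ℕ) where
  nA1' : ℕ
  wire : B → FwdWire A1 X1 (Fin nA1') ⊕ BackWire A1 X1 (Fin nA1')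
  w : B → X1 → ℝ
  w_nonneg : ∀ b x1, 0 ≤ w b x1
  w_sum : ∀ b, ∑ x1, w b x1 = 1
  L : Fin nC → B → Fin nA1' → ℝ
  L_nonneg : ∀ c b a1', 0 ≤ L c b a1'
  L_sum : ∀ b a1', ∑ c, L c b a1' = 1

/-- The output distribution of a pure distinguishing operation applied to a c-d state. -/
noncomputable def PureOp.out {B A1 X1 : Type} [Fintype B] [Fintype A1] [Fintype X1] {nC : ℕ}
    (G : PureOp B A1 X1 nC) (P : B → A1 → X1 → ℝ) : Fin nC → ℝ :=
  fun c => ∑ b, ∑ a1' : Fin G.nA1', ∑ x1,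
    G.L c b a1' * G.w b x1 *
      (Sum.elim (fun W => FwdWire.apply W (P b)) (fun W => BackWire.apply W (P b))
        (G.wire b) a1' x1)

/-- A classical-device (c-d) state: nonnegative, normalized for each input, and
non-signaling from the device input to the classical part. -/
def IsCDState {B A1 X1 : Type} [Fintype B] [Fintype A1] [Fintype X1]
    (P : B → A1 → X1 → ℝ) : Prop :=
  (∀ b a1 x1, 0 ≤ P b a1 x1) ∧
  (∀ x1, ∑ b, ∑ a1, P b a1 x1 = 1) ∧
  (∀ b x1 x1', ∑ a1, P b a1 x1 = ∑ a1, P b a1 x1')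

/-- The non-signaling norm distance between two c-d states: the supremum, over all finite
convex combinations of pure distinguishing operations, of half the total variational
distance of the output distributions. -/
noncomputable def nsNormCD {B A1 X1 : Type} [Fintype B] [Fintype A1] [Fintype X1]
    (P1 P2 : B → A1 → X1 → ℝ) : ℝ :=
  sSup { r : ℝ | ∃ (nC m : ℕ) (lam : Fin m → ℝ) (gs : Fin m → PureOp B A1 X1 nC),
    (∀ i, 0 ≤ lam i) ∧ (∑ i, lam i = 1) ∧
    r = (1/2) * ∑ c, |(∑ i, lam i * (gs i).out P1 c) - (∑ i, lam i * (gs i).out P2 c)| }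

lemma FwdWire.apply_sub' {A1 X1 A1' : Type} [Fintype A1] [Fintype X1] [Fintype A1']
    [DecidableEq A1'] (W : FwdWire A1 X1 A1') (P Q : A1 → X1 → ℝ) (a : A1') (x : X1) :
    W.apply P a x - W.apply Q a x = W.apply (fun a x => P a x - Q a x) a x := by
  simp only [FwdWire.apply, ← Finset.sum_sub_distrib]
  refine Finset.sum_congr rfl fun _ _ => Finset.sum_congr rfl fun _ _ => ?_
  split_ifs <;> ring

lemma BackWire.apply_sub' {A1 X1 A1' : Type} [Fintype A1] [Fintype X1] [Fintype A1']
    [DecidableEq A1'] (W : BackWire A1 X1 A1') (P Q : A1 → X1 → ℝ) (a : A1') (x : X1) :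
    W.apply P a x - W.apply Q a x = W.apply (fun a x => P a x - Q a x) a x := by
  simp only [BackWire.apply, ← Finset.sum_sub_distrib]
  refine Finset.sum_congr rfl fun _ _ => Finset.sum_congr rfl fun _ _ => ?_
  split_ifs <;> ring

lemma PureOp.out_sub' {B A1 X1 : Type} [Fintype B] [Fintype A1] [Fintype X1] {nC : ℕ}
    (G : PureOp B A1 X1 nC) (P Q : B → A1 → X1 → ℝ) (c : Fin nC) :
    G.out P c - G.out Q c = G.out (fun b a x => P b a x - Q b a x) c := by
  simp only [PureOp.out, ← Finset.sum_sub_distrib]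
  refine Finset.sum_congr rfl fun b _ => Finset.sum_congr rfl fun a _ =>
    Finset.sum_congr rfl fun x _ => ?_
  rw [← mul_sub]
  congr 1
  rcases G.wire b with W | W
  · exact W.apply_sub' _ _ _ _
  · exact W.apply_sub' _ _ _ _

lemma ite_sum_abs_le {A1 A1' : Type} [Fintype A1] [Fintype A1'] [DecidableEq A1'] (n : ℕ)
    (g : A1 → Fin n → A1') (t : A1 → Fin n → ℝ) :
    ∑ a', |∑ a, ∑ a2, if g a a2 = a' then t a a2 else 0| ≤ ∑ a, ∑ a2, |t a a2| := by
  calc ∑ a', |∑ a, ∑ a2, if g a a2 = a' then t a a2 else 0|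
      ≤ ∑ a', ∑ a, ∑ a2, if g a a2 = a' then |t a a2| else 0 := by
        refine Finset.sum_le_sum fun a' _ => ?_
        refine (Finset.abs_sum_le_sum_abs _ _).trans (Finset.sum_le_sum fun a _ => ?_)
        refine (Finset.abs_sum_le_sum_abs _ _).trans (Finset.sum_le_sum fun a2 _ => ?_)
        split_ifs <;> simp
    _ = ∑ a, ∑ a2, |t a a2| := by
        rw [Finset.sum_comm]
        refine Finset.sum_congr rfl fun a _ => ?_
        rw [Finset.sum_comm]
        refine Finset.sum_congr rfl fun a2 _ => ?_
        simp

lemma FwdWire.abs_le' {A1 X1 A1' : Type} [Fintype A1] [Fintype X1] [Fintype A1']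
    [DecidableEq A1'] (W : FwdWire A1 X1 A1') (P : A1 → X1 → ℝ) (M : ℝ)
    (hM : ∀ x, ∑ a, |P a x| ≤ M) (x : X1) : ∑ a', |W.apply P a' x| ≤ M := by
  refine le_trans ?_ (hM x)
  refine (ite_sum_abs_le W.nA2 (fun a a2 => W.g a a2 x)
    (fun a a2 => P a x * W.D a2 (W.f a x))).trans (le_of_eq ?_)
  refine Finset.sum_congr rfl fun a _ => ?_
  simp only [abs_mul, abs_of_nonneg (W.D_nonneg _ _)]
  rw [← Finset.mul_sum, W.D_sum, mul_one]

lemma BackWire.abs_le' {A1 X1 A1' : Type} [Fintype A1] [Fintype X1] [Fintype A1']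
    [DecidableEq A1'] (W : BackWire A1 X1 A1') (P : A1 → X1 → ℝ) (M : ℝ)
    (hM : ∀ x, ∑ a, |P a x| ≤ M) (x : X1) : ∑ a', |W.apply P a' x| ≤ M := by
  refine (ite_sum_abs_le W.nA2 (fun a a2 => W.g a a2 x)
    (fun a a2 => P a (W.f a2 x) * W.D a2 x)).trans ?_
  rw [Finset.sum_comm]
  simp only [abs_mul, abs_of_nonneg (W.D_nonneg _ _)]
  calc ∑ a2, ∑ a, |P a (W.f a2 x)| * W.D a2 x ≤ ∑ a2, M * W.D a2 x := by
        refine Finset.sum_le_sum fun a2 _ => ?_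
        rw [← Finset.sum_mul]
        exact mul_le_mul_of_nonneg_right (hM _) (W.D_nonneg _ _)
    _ = M := by rw [← Finset.mul_sum, W.D_sum, mul_one]

lemma PureOp.abs_le' {B A1 X1 : Type} [Fintype B] [Fintype A1] [Fintype X1] {nC : ℕ}
    (G : PureOp B A1 X1 nC) (P : B → A1 → X1 → ℝ) (M : B → ℝ)
    (hM : ∀ b x, ∑ a, |P b a x| ≤ M b) : ∑ c, |G.out P c| ≤ ∑ b, M b := by
  set V : B → Fin G.nA1' → X1 → ℝ := fun b a' x =>
    (Sum.elim (fun W => FwdWire.apply W (P b)) (fun W => BackWire.apply W (P b))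
        (G.wire b) a' x) with hV
  have hVM : ∀ b x, ∑ a', |V b a' x| ≤ M b := by
    intro b x
    simp only [hV]
    rcases G.wire b with W | W
    · exact W.abs_le' _ _ (hM b) x
    · exact W.abs_le' _ _ (hM b) x
  calc ∑ c, |G.out P c| ≤ ∑ c, ∑ b, ∑ a', ∑ x, G.L c b a' * (G.w b x * |V b a' x|) := by
        refine Finset.sum_le_sum fun c _ => ?_
        refine (Finset.abs_sum_le_sum_abs _ _).trans (Finset.sum_le_sum fun b _ => ?_)
        refine (Finset.abs_sum_le_sum_abs _ _).trans (Finset.sum_le_sum fun a _ => ?_)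
        refine (Finset.abs_sum_le_sum_abs _ _).trans (Finset.sum_le_sum fun x _ => ?_)
        rw [abs_mul, abs_mul, abs_of_nonneg (G.L_nonneg _ _ _), abs_of_nonneg (G.w_nonneg _ _),
          mul_assoc]
    _ = ∑ b, ∑ a', ∑ x, G.w b x * |V b a' x| := by
        rw [Finset.sum_comm]
        refine Finset.sum_congr rfl fun b _ => ?_
        rw [Finset.sum_comm]
        refine Finset.sum_congr rfl fun a _ => ?_
        rw [Finset.sum_comm]
        refine Finset.sum_congr rfl fun x _ => ?_
        rw [← Finset.sum_mul, G.L_sum, one_mul]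
    _ ≤ ∑ b, M b := by
        refine Finset.sum_le_sum fun b _ => ?_
        rw [Finset.sum_comm]
        calc ∑ x, ∑ a', G.w b x * |V b a' x| ≤ ∑ x, G.w b x * M b := by
              refine Finset.sum_le_sum fun x _ => ?_
              rw [← Finset.mul_sum]
              exact mul_le_mul_of_nonneg_left (hVM b x) (G.w_nonneg _ _)
          _ = M b := by rw [← Finset.sum_mul, G.w_sum, one_mul]

/-- The trivial forward wiring, which relabels the output. -/
noncomputable def optWire (A1 X1 : Type) [Fintype A1] [Fintype X1] :
    FwdWire A1 X1 (Fin (Fintype.card A1)) where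
  nA2 := 1
  nX2 := 1
  D := fun _ _ => 1
  D_nonneg := fun _ _ => zero_le_one
  D_sum := fun _ => by simp
  f := fun _ _ => 0
  g := fun a _ _ => Fintype.equivFin A1 a

lemma optWire_apply {A1 X1 : Type} [Fintype A1] [Fintype X1] (P : A1 → X1 → ℝ) (a : A1) (x : X1) :
    (optWire A1 X1).apply P (Fintype.equivFin A1 a) x = P a x := by
  classical
  change ∑ a1, ∑ _a2 : Fin 1, (if Fintype.equivFin A1 a1 = Fintype.equivFin A1 a then
    P a1 x * 1 else 0) = _
  simp

/-- The optimal operation: measure at the input `xs b`, output the sign given by `s`. -/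
noncomputable def optOp {B A1 X1 : Type} [Fintype B] [Fintype A1] [Fintype X1] [DecidableEq X1]
    (xs : B → X1) (s : B → A1 → ℝ) (hs : ∀ b a, 0 ≤ s b a ∧ s b a ≤ 1) :
    PureOp B A1 X1 2 where
  nA1' := Fintype.card A1
  wire := fun _ => Sum.inl (optWire A1 X1)
  w := fun b x => if x = xs b then 1 else 0
  w_nonneg := fun b x => by split_ifs <;> norm_num
  w_sum := fun b => by simp
  L := fun c b a => if c = 0 then s b ((Fintype.equivFin A1).symm a)
    else 1 - s b ((Fintype.equivFin A1).symm a)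
  L_nonneg := fun c b a => by
    have := hs b ((Fintype.equivFin A1).symm a)
    split_ifs <;> linarith
  L_sum := fun b a => by simp [Fin.sum_univ_two]

lemma optOp_out {B A1 X1 : Type} [Fintype B] [Fintype A1] [Fintype X1] [DecidableEq X1]
    (xs : B → X1) (s : B → A1 → ℝ) (hs : ∀ b a, 0 ≤ s b a ∧ s b a ≤ 1)
    (P : B → A1 → X1 → ℝ) (c : Fin 2) :
    (optOp xs s hs).out P c =
      ∑ b, ∑ a, (if c = 0 then s b a else 1 - s b a) * P b a (xs b) := by
  unfold PureOp.out
  refine Finset.sum_congr rfl fun b _ => ?_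
  refine ((Fintype.equivFin A1).sum_comp _).symm.trans ?_
  refine Finset.sum_congr rfl fun a _ => ?_
  change ∑ x, (if c = 0 then s b ((Fintype.equivFin A1).symm (Fintype.equivFin A1 a))
    else 1 - s b ((Fintype.equivFin A1).symm (Fintype.equivFin A1 a))) *
      (if x = xs b then 1 else 0) * (optWire A1 X1).apply (P b) (Fintype.equivFin A1 a) x = _
  simp only [optWire_apply]
  simp

/-- The NS norm of the difference of two c-d states has the closed form
`(1/2) ∑_b max_{x1} ∑_{a1} |P1(b,a1|x1) − P2(b,a1|x1)|`. -/
theorem nsNormCD_closed_form {B A1 X1 : Type} [Fintype B] [Fintype A1] [Fintype X1]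
    [Nonempty X1] (P1 P2 : B → A1 → X1 → ℝ) (h1 : IsCDState P1) (h2 : IsCDState P2) :
    nsNormCD P1 P2 =
      (1/2) * ∑ b, Finset.univ.sup' Finset.univ_nonempty
        (fun x1 => ∑ a1, |P1 b a1 x1 - P2 b a1 x1|) := by
  classical
  set M : B → ℝ := fun b => Finset.univ.sup' Finset.univ_nonempty
        (fun x1 => ∑ a1, |P1 b a1 x1 - P2 b a1 x1|) with hMdef
  have hM : ∀ b x, ∑ a1, |P1 b a1 x - P2 b a1 x| ≤ M b := fun b x =>
    Finset.le_sup' (fun x1 => ∑ a1, |P1 b a1 x1 - P2 b a1 x1|) (Finset.mem_univ x)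
  have hex : ∀ b, ∃ x, M b = ∑ a1, |P1 b a1 x - P2 b a1 x| := fun b => by
    obtain ⟨x, -, hx⟩ := Finset.exists_mem_eq_sup' (Finset.univ_nonempty (α := X1))
      (fun x1 => ∑ a1, |P1 b a1 x1 - P2 b a1 x1|)
    exact ⟨x, hx⟩
  choose xs hxs using hex
  refine IsGreatest.csSup_eq ⟨?_, ?_⟩
  · have hs : ∀ b a, (0:ℝ) ≤ (if 0 ≤ P1 b a (xs b) - P2 b a (xs b) then 1 else 0) ∧
        (if 0 ≤ P1 b a (xs b) - P2 b a (xs b) then 1 else 0) ≤ (1:ℝ) := by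
      intro b a
      split_ifs <;> norm_num
    refine ⟨2, 1, fun _ => 1, fun _ => optOp xs _ hs, fun _ => zero_le_one, by simp, ?_⟩
    congr 1
    simp only [Finset.univ_unique, Finset.sum_singleton, one_mul, PureOp.out_sub']
    simp only [optOp_out, Fin.sum_univ_two, if_true, one_ne_zero, if_false]
    rw [abs_of_nonneg, abs_of_nonpos, ← Finset.sum_neg_distrib, ← Finset.sum_add_distrib]
    · refine Finset.sum_congr rfl fun b _ => ?_
      rw [hxs b, ← Finset.sum_neg_distrib, ← Finset.sum_add_distrib]
      refine Finset.sum_congr rfl fun a _ => ?_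
      split_ifs with h
      · rw [abs_of_nonneg h]; ring
      · rw [abs_of_neg (not_le.mp h)]; ring
    · refine Finset.sum_nonpos fun b _ => Finset.sum_nonpos fun a _ => ?_
      split_ifs with h
      · simp
      · linarith [not_le.mp h]
    · refine Finset.sum_nonneg fun b _ => Finset.sum_nonneg fun a _ => ?_
      split_ifs with h
      · linarith
      · simp
  · rintro r ⟨nC, m, lam, gs, hl, hl1, rfl⟩
    refine mul_le_mul_of_nonneg_left ?_ (by norm_num)
    calc _ ≤ ∑ c, ∑ i, lam i * |(gs i).out (fun b a x => P1 b a x - P2 b a x) c| := by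
          refine Finset.sum_le_sum fun c _ => ?_
          rw [← Finset.sum_sub_distrib]
          refine (Finset.abs_sum_le_sum_abs _ _).trans (Finset.sum_le_sum fun i _ => ?_)
          rw [← mul_sub, PureOp.out_sub', abs_mul, abs_of_nonneg (hl i)]
      _ = ∑ i, lam i * ∑ c, |(gs i).out (fun b a x => P1 b a x - P2 b a x) c| := by
          rw [Finset.sum_comm]
          simp only [Finset.mul_sum]
      _ ≤ ∑ i, lam i * ∑ b, M b := Finset.sum_le_sum fun i _ =>
          mul_le_mul_of_nonneg_left ((gs i).abs_le' _ M hM) (hl i)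
      _ = ∑ b, M b := by rw [← Finset.sum_mul, hl1, one_mul]
end

section
/- Forward-wiring bound: for any two classical-device states P1, P2 over finite sets B, A1, X1, any dice D(a2|x2,b), any families of deterministic forward-wiring functions {f_b : A1 x X1 -> X2}, {g_b : A1 x A2 x X1 -> A1'}, any fixed b in B, and any probability distribution w on X1 (a general measurement), one has: sum over a1' of | sum over x1 of w(x1) * (Pw1(b,a1'|x1) - Pw2(b,a1'|x1)) | <= max over x1 in X1 of sum over a1 in A1 of |P1(b,a1|x1) - P2(b,a1|x1)|, where Pwi(b,a1'|x1) := sum over (a1,a2) with g_b(a1,a2,x1) = a1' of Pi(b,a1|x1) * D(a2|f_b(a1,x1),b) for i = 1,2. -/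
/-- Forward-wiring bound: wiring the output of a c-d state into a dice (with deterministic
functions `f`, `g`), applying a general measurement `w` on the device input and comparing
the resulting distributions gives at most the maximal (over inputs) variational distance
of the original c-d states at the given classical outcome `b`. -/
theorem forward_wiring_bound
    {B A1 X1 A2 X2 A1' : Type} [Fintype B] [Fintype A1] [Fintype X1] [Fintype A2]
    [Fintype X2] [Fintype A1'] [Nonempty X1] [DecidableEq A1']
    (P1 P2 : B → A1 → X1 → ℝ)
    (hP1nonneg : ∀ b a1 x1, 0 ≤ P1 b a1 x1)
    (hP1sum : ∀ x1, ∑ b, ∑ a1, P1 b a1 x1 = 1)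
    (hP1ns : ∀ b x1 x1', ∑ a1, P1 b a1 x1 = ∑ a1, P1 b a1 x1')
    (hP2nonneg : ∀ b a1 x1, 0 ≤ P2 b a1 x1)
    (hP2sum : ∀ x1, ∑ b, ∑ a1, P2 b a1 x1 = 1)
    (hP2ns : ∀ b x1 x1', ∑ a1, P2 b a1 x1 = ∑ a1, P2 b a1 x1')
    (D : A2 → X2 → B → ℝ)
    (hDnonneg : ∀ a2 x2 b, 0 ≤ D a2 x2 b)
    (hDsum : ∀ x2 b, ∑ a2, D a2 x2 b = 1)
    (f : B → A1 → X1 → X2) (g : B → A1 → A2 → X1 → A1')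
    (b : B) (w : X1 → ℝ)
    (hwnonneg : ∀ x1, 0 ≤ w x1) (hwsum : ∑ x1, w x1 = 1) :
    ∑ a1', |∑ x1, w x1 *
        ((∑ a1, ∑ a2, if g b a1 a2 x1 = a1' then P1 b a1 x1 * D a2 (f b a1 x1) b else 0) -
         (∑ a1, ∑ a2, if g b a1 a2 x1 = a1' then P2 b a1 x1 * D a2 (f b a1 x1) b else 0))| ≤
      Finset.univ.sup' Finset.univ_nonempty
        (fun x1 => ∑ a1, |P1 b a1 x1 - P2 b a1 x1|) := by
  have key : ∀ x1, ∑ a1', |(∑ a1, ∑ a2,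
        if g b a1 a2 x1 = a1' then P1 b a1 x1 * D a2 (f b a1 x1) b else 0) -
         (∑ a1, ∑ a2, if g b a1 a2 x1 = a1' then P2 b a1 x1 * D a2 (f b a1 x1) b else 0)|
      ≤ ∑ a1, |P1 b a1 x1 - P2 b a1 x1| := by
    intro x1
    calc _ ≤ ∑ a1', ∑ a1, ∑ a2, (if g b a1 a2 x1 = a1' then
            |P1 b a1 x1 - P2 b a1 x1| * D a2 (f b a1 x1) b else 0) := by
          refine Finset.sum_le_sum fun a1' _ => ?_
          rw [← Finset.sum_sub_distrib]
          refine (Finset.abs_sum_le_sum_abs _ _).trans (Finset.sum_le_sum fun a1 _ => ?_)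
          rw [← Finset.sum_sub_distrib]
          refine (Finset.abs_sum_le_sum_abs _ _).trans (Finset.sum_le_sum fun a2 _ => ?_)
          split_ifs with h
          · rw [← sub_mul, abs_mul, abs_of_nonneg (hDnonneg _ _ _)]
          · simp
      _ = ∑ a1, |P1 b a1 x1 - P2 b a1 x1| := by
          rw [Finset.sum_comm]
          refine Finset.sum_congr rfl fun a1 _ => ?_
          rw [Finset.sum_comm]
          simp only [Finset.sum_ite_eq, Finset.mem_univ, if_true]
          rw [← Finset.mul_sum, hDsum, mul_one]
  have h1 : ∀ F : X1 → A1' → ℝ, ∑ a1', |∑ x1, w x1 * F x1 a1'|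
      ≤ ∑ x1, w x1 * ∑ a1', |F x1 a1'| := by
    intro F
    simp only [Finset.mul_sum]
    rw [Finset.sum_comm (s := (Finset.univ : Finset X1))]
    refine Finset.sum_le_sum fun a1' _ => ?_
    refine (Finset.abs_sum_le_sum_abs _ _).trans (Finset.sum_le_sum fun x1 _ => ?_)
    rw [abs_mul, abs_of_nonneg (hwnonneg _)]
  refine (h1 (fun x1 a1' => (∑ a1, ∑ a2,
        if g b a1 a2 x1 = a1' then P1 b a1 x1 * D a2 (f b a1 x1) b else 0) -
         (∑ a1, ∑ a2, if g b a1 a2 x1 = a1' then P2 b a1 x1 * D a2 (f b a1 x1) b else 0))).trans ?_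
  have h2 : ∀ x1, ∑ a1, |P1 b a1 x1 - P2 b a1 x1| ≤
      Finset.univ.sup' Finset.univ_nonempty (fun x1 => ∑ a1, |P1 b a1 x1 - P2 b a1 x1|) :=
    fun x1 => Finset.le_sup' (fun x1 => ∑ a1, |P1 b a1 x1 - P2 b a1 x1|) (Finset.mem_univ x1)
  refine (Finset.sum_le_sum fun x1 _ => mul_le_mul_of_nonneg_left ((key x1).trans (h2 x1))
    (hwnonneg x1)).trans ?_
  rw [← Finset.sum_mul, hwsum, one_mul]
end

section
/- Backward-wiring bound: for any two classical-device states P1, P2 over finite sets B, A1, X1, any dice D(a2|x1,b) with input set X1, any families of deterministic backward-wiring functions {f_b : A2 x X1 -> X1}, {g_b : A1 x A2 x X1 -> A1'}, any fixed b in B, and any probability distribution w on X1 (a general measurement), one has: sum over a1' of | sum over x1 of w(x1) * (Pw1(b,a1'|x1) - Pw2(b,a1'|x1)) | <= max over x1 in X1 of sum over a1 in A1 of |P1(b,a1|x1) - P2(b,a1|x1)|, where Pwi(b,a1'|x1) := sum over (a1,a2) with g_b(a1,a2,x1) = a1' of Pi(b,a1|f_b(a2,x1)) * D(a2|x1,b)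 for i = 1,2. -/
/-- Backward-wiring bound: wiring the output of a dice (with input set `X1`) into the
input of a c-d state via deterministic functions `f`, `g`, applying a general
measurement `w` and comparing the resulting distributions gives at most the maximal
(over inputs) variational distance of the original c-d states at the classical
outcome `b`. -/
theorem backward_wiring_bound
    {B A1 X1 A2 A1' : Type} [Fintype B] [Fintype A1] [Fintype X1] [Fintype A2]
    [Fintype A1'] [Nonempty X1] [DecidableEq A1']
    (P1 P2 : B → A1 → X1 → ℝ)
    (hP1nonneg : ∀ b a1 x1, 0 ≤ P1 b a1 x1)
    (hP1sum : ∀ x1, ∑ b, ∑ a1, P1 b a1 x1 = 1)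
    (hP1ns : ∀ b x1 x1', ∑ a1, P1 b a1 x1 = ∑ a1, P1 b a1 x1')
    (hP2nonneg : ∀ b a1 x1, 0 ≤ P2 b a1 x1)
    (hP2sum : ∀ x1, ∑ b, ∑ a1, P2 b a1 x1 = 1)
    (hP2ns : ∀ b x1 x1', ∑ a1, P2 b a1 x1 = ∑ a1, P2 b a1 x1')
    (D : A2 → X1 → B → ℝ)
    (hDnonneg : ∀ a2 x1 b, 0 ≤ D a2 x1 b)
    (hDsum : ∀ x1 b, ∑ a2, D a2 x1 b = 1)
    (f : B → A2 → X1 → X1) (g : B → A1 → A2 → X1 → A1')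
    (b : B) (w : X1 → ℝ)
    (hwnonneg : ∀ x1, 0 ≤ w x1) (hwsum : ∑ x1, w x1 = 1) :
    ∑ a1', |∑ x1, w x1 *
        ((∑ a1, ∑ a2, if g b a1 a2 x1 = a1' then P1 b a1 (f b a2 x1) * D a2 x1 b else 0) -
         (∑ a1, ∑ a2, if g b a1 a2 x1 = a1' then P2 b a1 (f b a2 x1) * D a2 x1 b else 0))| ≤
      Finset.univ.sup' Finset.univ_nonempty
        (fun x1 => ∑ a1, |P1 b a1 x1 - P2 b a1 x1|) := by
  set M := Finset.univ.sup' Finset.univ_nonempty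
        (fun x1 => ∑ a1, |P1 b a1 x1 - P2 b a1 x1|) with hM
  have hle : ∀ x, ∑ a1, |P1 b a1 x - P2 b a1 x| ≤ M := fun x =>
    Finset.le_sup' (fun x1 => ∑ a1, |P1 b a1 x1 - P2 b a1 x1|) (Finset.mem_univ x)
  have h1 : ∀ a1', |∑ x1, w x1 *
        ((∑ a1, ∑ a2, if g b a1 a2 x1 = a1' then P1 b a1 (f b a2 x1) * D a2 x1 b else 0) -
         (∑ a1, ∑ a2, if g b a1 a2 x1 = a1' then P2 b a1 (f b a2 x1) * D a2 x1 b else 0))|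
      ≤ ∑ x1, w x1 * ∑ a1, ∑ a2, if g b a1 a2 x1 = a1' then
          |P1 b a1 (f b a2 x1) - P2 b a1 (f b a2 x1)| * D a2 x1 b else 0 := by
    intro a1'
    refine (Finset.abs_sum_le_sum_abs _ _).trans (Finset.sum_le_sum fun x _ => ?_)
    rw [abs_mul, abs_of_nonneg (hwnonneg x)]
    refine mul_le_mul_of_nonneg_left ?_ (hwnonneg x)
    rw [← Finset.sum_sub_distrib]
    refine (Finset.abs_sum_le_sum_abs _ _).trans (Finset.sum_le_sum fun a1 _ => ?_)
    rw [← Finset.sum_sub_distrib]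
    refine (Finset.abs_sum_le_sum_abs _ _).trans (Finset.sum_le_sum fun a2 _ => ?_)
    split_ifs
    · rw [← sub_mul, abs_mul, abs_of_nonneg (hDnonneg a2 x b)]
    · simp
  refine (Finset.sum_le_sum fun a1' _ => h1 a1').trans ?_
  rw [Finset.sum_comm]
  have h2 : ∀ x, ∑ a1', w x * ∑ a1, ∑ a2, (if g b a1 a2 x = a1' then
          |P1 b a1 (f b a2 x) - P2 b a1 (f b a2 x)| * D a2 x b else 0) ≤ w x * M := by
    intro x
    rw [← Finset.mul_sum]
    refine mul_le_mul_of_nonneg_left ?_ (hwnonneg x)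
    have h3 : ∑ a1', ∑ a1, ∑ a2, (if g b a1 a2 x = a1' then
          |P1 b a1 (f b a2 x) - P2 b a1 (f b a2 x)| * D a2 x b else 0)
        = ∑ a2, (∑ a1, |P1 b a1 (f b a2 x) - P2 b a1 (f b a2 x)|) * D a2 x b := by
      rw [Finset.sum_comm]
      simp_rw [Finset.sum_mul]
      rw [Finset.sum_comm (s := (Finset.univ : Finset A2))]
      refine Finset.sum_congr rfl fun a1 _ => ?_
      rw [Finset.sum_comm]
      refine Finset.sum_congr rfl fun a2 _ => ?_
      simp
    rw [h3]
    calc _ ≤ ∑ a2, M * D a2 x b := Finset.sum_le_sum fun a2 _ =>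
          mul_le_mul_of_nonneg_right (hle _) (hDnonneg a2 x b)
      _ = M := by rw [← Finset.mul_sum, hDsum, mul_one]
  refine (Finset.sum_le_sum fun x _ => h2 x).trans ?_
  rw [← Finset.sum_mul, hwsum, one_mul]
end

section
/- For every cc-d distribution P, the NS distance between P and its intermediate state equals the probability that the two key strings differ: D_NS(P, P^int) = Pr[S_A != S_B]. -/
/-- A classical-classical-device (cc-d) distribution over `S_A = S_B = K`, `Q`, `E`
with Eve's input set `Z`: nonnegative, normalized for each `z`, and non-signaling
from Eve's input to the classical part. -/
def IsCCD {K Q E Z : Type} [Fintype K] [Fintype Q] [Fintype E]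
    (P : K → K → Q → E → Z → ℝ) : Prop :=
  (∀ sA sB q e z, 0 ≤ P sA sB q e z) ∧
  (∀ z, ∑ sA, ∑ sB, ∑ q, ∑ e, P sA sB q e z = 1) ∧
  (∀ sA sB q z z', ∑ e, P sA sB q e z = ∑ e, P sA sB q e z')

/-- The NS distance between two cc-d distributions. -/
noncomputable def dNS {K Q E Z : Type} [Fintype K] [Fintype Q] [Fintype E] [Fintype Z]
    [Nonempty Z] (P R : K → K → Q → E → Z → ℝ) : ℝ :=
  (1/2) * ∑ sA, ∑ sB, ∑ q, Finset.univ.sup' Finset.univ_nonempty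
    (fun z => ∑ e, |P sA sB q e z - R sA sB q e z|)

/-- The Alice–Eve marginal NS distance between two cc-d distributions. -/
noncomputable def dNSA {K Q E Z : Type} [Fintype K] [Fintype Q] [Fintype E] [Fintype Z]
    [Nonempty Z] (P R : K → K → Q → E → Z → ℝ) : ℝ :=
  (1/2) * ∑ sA, ∑ q, Finset.univ.sup' Finset.univ_nonempty
    (fun z => ∑ e, |(∑ sB, P sA sB q e z) - (∑ sB, R sA sB q e z)|)

/-- The intermediate state of a cc-d distribution: perfectly correlated keys with the
distribution of Alice's key. -/
noncomputable def interState {K Q E Z : Type} [Fintype K] [DecidableEq K]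
    (P : K → K → Q → E → Z → ℝ) : K → K → Q → E → Z → ℝ :=
  fun sA sB q e z => if sA = sB then ∑ s', P sA s' q e z else 0

/-- The ideal state of a cc-d distribution: uniform perfectly correlated keys,
product with Eve's (and the communication) system. -/
noncomputable def idealState {K Q E Z : Type} [Fintype K] [DecidableEq K]
    (P : K → K → Q → E → Z → ℝ) : K → K → Q → E → Z → ℝ :=
  fun sA sB q e z =>
    (if sA = sB then (1 : ℝ) / (Fintype.card K) else 0) * ∑ sA', ∑ sB', P sA' sB' q e z

/-- The probability that the two key strings differ (computed at Eve's input `z`;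
by non-signaling this does not depend on `z`). -/
noncomputable def errProb {K Q E Z : Type} [Fintype K] [Fintype Q] [Fintype E] [DecidableEq K]
    (P : K → K → Q → E → Z → ℝ) (z : Z) : ℝ :=
  ∑ sA, ∑ sB, ∑ q, ∑ e, if sA = sB then (0 : ℝ) else P sA sB q e z

/-- The NS distance between a cc-d distribution and its intermediate state equals the
probability that the two key strings differ. -/
theorem dNS_interState_eq_errProb {K Q E Z : Type} [Fintype K] [Fintype Q] [Fintype E]
    [Fintype Z] [Nonempty K] [Nonempty Z] [DecidableEq K]
    (P : K → K → Q → E → Z → ℝ) (hP : IsCCD P) (z : Z) :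
    dNS P (interState P) = errProb P z := by
  obtain ⟨h0, -, hns⟩ := hP
  have key : ∀ sA sB q e z, |P sA sB q e z - interState P sA sB q e z| =
      (if sA = sB then (0 : ℝ) else P sA sB q e z) +
        (if sA = sB then ∑ s', (if sA = s' then (0 : ℝ) else P sA s' q e z) else 0) := by
    intro sA sB q e z
    unfold interState
    by_cases h : sA = sB
    · subst h
      have h1 : ∑ s', P sA s' q e z
          = P sA sA q e z + ∑ s', (if sA = s' then (0 : ℝ) else P sA s' q e z) := by
        have h2 : ∀ s', P sA s' q e z = (if sA = s' then P sA s' q e z else 0) +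
            (if sA = s' then (0 : ℝ) else P sA s' q e z) := by
          intro s'
          split_ifs <;> simp
        rw [Finset.sum_congr rfl (fun s' _ => h2 s'), Finset.sum_add_distrib]
        simp
      have h3 : 0 ≤ ∑ s', (if sA = s' then (0 : ℝ) else P sA s' q e z) := by
        apply Finset.sum_nonneg
        intro s' _
        split_ifs
        · exact le_rfl
        · exact h0 _ _ _ _ _
      simp only [if_true, zero_add]
      rw [h1, sub_add_cancel_left, abs_neg, abs_of_nonneg h3]
    · simp [h, abs_of_nonneg (h0 sA sB q e z)]
  have hN : ∀ sA sB q z', ∑ e, (if sA = sB then (0 : ℝ) else P sA sB q e z') =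
      ∑ e, (if sA = sB then (0 : ℝ) else P sA sB q e z) := by
    intro sA sB q z'
    split_ifs
    · rfl
    · exact hns _ _ _ _ _
  have hsum : ∀ sA sB q z', ∑ e, |P sA sB q e z' - interState P sA sB q e z'| =
      (∑ e, if sA = sB then (0 : ℝ) else P sA sB q e z) +
      (if sA = sB then ∑ s', ∑ e, (if sA = s' then (0 : ℝ) else P sA s' q e z) else 0) := by
    intro sA sB q z'
    rw [Finset.sum_congr rfl (fun e _ => key sA sB q e z'), Finset.sum_add_distrib, hN]
    congr 1
    by_cases h : sA = sB
    · simp only [if_pos h]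
      rw [Finset.sum_comm]
      exact Finset.sum_congr rfl (fun s' _ => hN _ _ _ _)
    · simp [h]
  have hfin : ∀ sA, ∑ sB, ∑ q,
      (if sA = sB then ∑ s', ∑ e, (if sA = s' then (0 : ℝ) else P sA s' q e z) else 0) =
      ∑ sB, ∑ q, ∑ e, (if sA = sB then (0 : ℝ) else P sA sB q e z) := by
    intro sA
    rw [Finset.sum_comm, Finset.sum_comm (s := (Finset.univ : Finset K))]
    refine Finset.sum_congr rfl (fun q _ => ?_)
    rw [Finset.sum_ite_eq]
    simp only [Finset.mem_univ, if_true]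
  unfold dNS errProb
  simp only [hsum, Finset.sup'_const, Finset.sum_add_distrib, hfin]
  ring
end

section
/- Secrecy and correctness imply security: for every cc-d distribution P, D_NS(P, P^ideal) <= Pr[S_A != S_B] + D_NS^A(P, P^ideal). -/
/-- Secrecy and correctness imply security:
`D_NS(P, P^ideal) ≤ Pr[S_A ≠ S_B] + D_NS^A(P, P^ideal)`. -/
theorem secrecy_and_correctness_imply_security {K Q E Z : Type} [Fintype K] [Fintype Q]
    [Fintype E] [Fintype Z] [Nonempty K] [Nonempty Z] [DecidableEq K]
    (P : K → K → Q → E → Z → ℝ) (hP : IsCCD P) (z : Z) :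
    dNS P (idealState P) ≤ errProb P z + dNSA P (idealState P) := by
  obtain ⟨hnn, -, hns⟩ := hP
  set w : K → K → Q → ℝ := fun a b q => ∑ e, if a = b then (0 : ℝ) else P a b q e z with hw
  set M : K → Q → ℝ := fun a q => Finset.univ.sup' Finset.univ_nonempty
    (fun z => ∑ e, |(∑ sB, P a sB q e z) - (∑ sB, idealState P a sB q e z)|) with hM
  have hwz : ∀ a b q z', w a b q = ∑ e, if a = b then (0 : ℝ) else P a b q e z' := by
    intro a b q z'
    by_cases hab : a = b
    · simp [hw, hab]
    · simp only [hw, if_neg hab]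
      exact hns a b q z z'
  have key : ∀ a b q, Finset.univ.sup' Finset.univ_nonempty
      (fun z => ∑ e, |P a b q e z - idealState P a b q e z|)
      ≤ w a b q + if a = b then M a q + ∑ b', w a b' q else 0 := by
    intro a b q
    apply Finset.sup'_le
    intro z' _
    rw [hwz a b q z']
    by_cases hab : a = b
    · subst hab
      simp only [if_true, Finset.sum_const_zero, zero_add]
      have h1 : ∑ e, |(∑ sB, P a sB q e z') - (∑ sB, idealState P a sB q e z')| ≤ M a q :=
        Finset.le_sup' (fun z => ∑ e, |(∑ sB, P a sB q e z) - (∑ sB, idealState P a sB q e z)|)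
          (Finset.mem_univ z')
      have h2 : ∑ b', w a b' q = ∑ e, ∑ b', if a = b' then (0 : ℝ) else P a b' q e z' := by
        exact (Finset.sum_congr rfl fun b' _ => hwz a b' q z').trans Finset.sum_comm
      have h3 : ∑ e, |P a a q e z' - idealState P a a q e z'| ≤
          ∑ e, (|(∑ sB, P a sB q e z') - (∑ sB, idealState P a sB q e z')|
            + ∑ b', if a = b' then (0 : ℝ) else P a b' q e z') := by
        apply Finset.sum_le_sum
        intro e _
        have e1 : ∑ sB, idealState P a sB q e z' = idealState P a a q e z' := by
          apply Finset.sum_eq_single a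
          · intro b _ hb
            simp [idealState, hb.symm]
          · simp
        have e2 : ∑ sB, P a sB q e z' = P a a q e z'
            + ∑ b', if a = b' then (0 : ℝ) else P a b' q e z' := by
          have : P a a q e z' = ∑ b', if a = b' then P a b' q e z' else 0 := by simp
          rw [this, ← Finset.sum_add_distrib]
          refine Finset.sum_congr rfl fun b' _ => ?_
          split_ifs <;> simp
        have e3 : 0 ≤ ∑ b', if a = b' then (0 : ℝ) else P a b' q e z' := by
          apply Finset.sum_nonneg
          intro b' _
          split_ifs
          · exact le_rfl
          · exact hnn _ _ _ _ _
        rw [e1, e2]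
        generalize (∑ b', if a = b' then (0 : ℝ) else P a b' q e z') = t at e3 ⊢
        rw [abs_le]
        constructor
        · linarith [neg_abs_le (P a a q e z' + t - idealState P a a q e z')]
        · linarith [le_abs_self (P a a q e z' + t - idealState P a a q e z')]
      rw [Finset.sum_add_distrib, ← h2] at h3
      linarith
    · simp only [if_neg hab, add_zero]
      apply Finset.sum_le_sum
      intro e _
      simp [idealState, hab, abs_of_nonneg (hnn a b q e z')]
  have herr : errProb P z = ∑ a, ∑ b, ∑ q, w a b q := rfl
  have hA : dNSA P (idealState P) = (1/2) * ∑ a, ∑ q, M a q := rfl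
  have hsum : ∑ a, ∑ b, ∑ q, (w a b q + if a = b then M a q + ∑ b', w a b' q else 0)
      = (∑ a, ∑ b, ∑ q, w a b q) + ((∑ a, ∑ q, M a q) + ∑ a, ∑ b, ∑ q, w a b q) := by
    rw [← Finset.sum_add_distrib, ← Finset.sum_add_distrib]
    refine Finset.sum_congr rfl fun a _ => ?_
    simp only [Finset.sum_add_distrib]
    congr 1
    rw [Finset.sum_comm (f := fun b q => w a b q), ← Finset.sum_add_distrib, Finset.sum_comm]
    refine Finset.sum_congr rfl fun q _ => ?_
    simp
  have hD : dNS P (idealState P) ≤ (1/2) *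
      ∑ a, ∑ b, ∑ q, (w a b q + if a = b then M a q + ∑ b', w a b' q else 0) := by
    unfold dNS
    apply mul_le_mul_of_nonneg_left _ (by norm_num)
    exact Finset.sum_le_sum fun a _ => Finset.sum_le_sum fun b _ =>
      Finset.sum_le_sum fun q _ => key a b q
  rw [hsum] at hD
  rw [herr, hA]
  linarith
end

section
/- The squashed non-locality is convex with respect to mixtures of devices: if P and R are bipartite non-signaling devices over the same finite sets A, B, X, Y and 0 <= t <= 1, then N_sq(t*P + (1-t)*R) <= t*N_sq(P) + (1-t)*N_sq(R), where (t*P + (1-t)*R)(a,b|x,y) := t*P(a,b|x,y) + (1-t)*R(a,b|x,y). -/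
/-- Shannon entropy (base-2) of a finitely supported real-valued distribution. -/
noncomputable def shannonEnt {α : Type} [Fintype α] (p : α → ℝ) : ℝ :=
  -∑ a, p a * Real.logb 2 (p a)

/-- Shannon mutual information (base-2) of a joint distribution on `α × β`. -/
noncomputable def mutInfo {α β : Type} [Fintype α] [Fintype β] (R : α → β → ℝ) : ℝ :=
  shannonEnt (fun a => ∑ b, R a b) + shannonEnt (fun b => ∑ a, R a b) -
    shannonEnt (fun p : α × β => R p.1 p.2)

/-- A bipartite non-signaling device over finite output sets `A`, `B` and input
sets `X`, `Y`. -/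
def IsDevice {A B X Y : Type} [Fintype A] [Fintype B] (P : A → B → X → Y → ℝ) : Prop :=
  (∀ a b x y, 0 ≤ P a b x y) ∧
  (∀ x y, ∑ a, ∑ b, P a b x y = 1) ∧
  (∀ a x y y', ∑ b, P a b x y = ∑ b, P a b x y') ∧
  (∀ b y x x', ∑ a, P a b x y = ∑ a, P a b x' y)

/-- The set of values `∑_e p_e · I(A:B)_{P_e(·,·|x,y)}` over all (finite) ensembles
`{(p_e, P_e)}` of the device `P` into non-signaling devices. -/
def NsqSet {A B X Y : Type} [Fintype A] [Fintype B]
    (P : A → B → X → Y → ℝ) (x : X) (y : Y) : Set ℝ :=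
  { r | ∃ (n : ℕ) (p : Fin n → ℝ) (Pe : Fin n → A → B → X → Y → ℝ),
      (∀ i, 0 ≤ p i) ∧ (∑ i, p i = 1) ∧ (∀ i, IsDevice (Pe i)) ∧
      (∀ a b x' y', ∑ i, p i * Pe i a b x' y' = P a b x' y') ∧
      r = ∑ i, p i * mutInfo (fun a b => Pe i a b x y) }

/-- The squashed non-locality of a bipartite device: the maximum over inputs `(x,y)` of
the infimum over ensembles of the averaged mutual information at fixed inputs. -/
noncomputable def Nsq {A B X Y : Type} [Fintype A] [Fintype B] [Fintype X] [Fintype Y]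
    [Nonempty X] [Nonempty Y] (P : A → B → X → Y → ℝ) : ℝ :=
  Finset.univ.sup' Finset.univ_nonempty (fun xy : X × Y => sInf (NsqSet P xy.1 xy.2))

/-- A local device, i.e. one admitting a local hidden variable model. -/
def IsLocalDevice {A B X Y : Type} [Fintype A] [Fintype B] (P : A → B → X → Y → ℝ) : Prop :=
  ∃ (n : ℕ) (mu : Fin n → ℝ) (LA : A → X → Fin n → ℝ) (LB : B → Y → Fin n → ℝ),
    (∀ i, 0 ≤ mu i) ∧ (∑ i, mu i = 1) ∧
    (∀ a x i, 0 ≤ LA a x i) ∧ (∀ x i, ∑ a, LA a x i = 1) ∧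
    (∀ b y i, 0 ≤ LB b y i) ∧ (∀ y i, ∑ b, LB b y i = 1) ∧
    (∀ a b x y, P a b x y = ∑ i, mu i * LA a x i * LB b y i)

theorem shannonEnt_nonneg' {α : Type} [Fintype α] (p : α → ℝ) (h0 : ∀ a, 0 ≤ p a)
    (h1 : ∀ a, p a ≤ 1) : 0 ≤ shannonEnt p := by
  unfold shannonEnt
  rw [neg_nonneg]
  refine Finset.sum_nonpos fun a _ => mul_nonpos_of_nonneg_of_nonpos (h0 a) ?_
  exact Real.logb_nonpos (by norm_num) (h0 a) (h1 a)

theorem shannonEnt_le' {α : Type} [Fintype α] (p : α → ℝ) (h0 : ∀ a, 0 ≤ p a) :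
    shannonEnt p ≤ Fintype.card α * (1 / Real.log 2) := by
  unfold shannonEnt
  rw [← Finset.sum_neg_distrib]
  have hl : 0 < Real.log 2 := Real.log_pos (by norm_num)
  have : ∀ a ∈ Finset.univ, -(p a * Real.logb 2 (p a)) ≤ 1 / Real.log 2 := by
    intro a _
    have hk : -(p a * Real.log (p a)) ≤ 1 := by
      rcases (h0 a).eq_or_lt with h | h
      · rw [← h]; simp
      · have h2 := Real.one_sub_inv_le_log_of_pos h
        have h3 := mul_le_mul_of_nonneg_left h2 h.le
        rw [mul_sub, mul_inv_cancel₀ h.ne'] at h3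
        linarith
    unfold Real.logb
    rw [← mul_div_assoc, ← neg_div]
    gcongr
  have h := Finset.sum_le_card_nsmul _ _ _ this
  simpa [nsmul_eq_mul] using h

theorem mutInfo_ge' {A B X Y : Type} [Fintype A] [Fintype B] (P : A → B → X → Y → ℝ)
    (hP : IsDevice P) (x : X) (y : Y) :
    -(Fintype.card (A × B) * (1 / Real.log 2)) ≤ mutInfo (fun a b => P a b x y) := by
  obtain ⟨h0, h1, -, -⟩ := hP
  have e1 := shannonEnt_nonneg' (fun a => ∑ b, P a b x y)
    (fun a => Finset.sum_nonneg fun b _ => h0 a b x y) (fun a => by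
      rw [← h1 x y]
      exact Finset.single_le_sum (f := fun a => ∑ b, P a b x y)
        (fun a _ => Finset.sum_nonneg fun b _ => h0 a b x y) (Finset.mem_univ a))
  have e2 := shannonEnt_nonneg' (fun b => ∑ a, P a b x y)
    (fun b => Finset.sum_nonneg fun a _ => h0 a b x y) (fun b => by
      rw [← h1 x y, Finset.sum_comm]
      exact Finset.single_le_sum (f := fun b => ∑ a, P a b x y)
        (fun b _ => Finset.sum_nonneg fun a _ => h0 a b x y) (Finset.mem_univ b))
  have e3 := shannonEnt_le' (fun p : A × B => P p.1 p.2 x y) (fun p => h0 p.1 p.2 x y)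
  unfold mutInfo
  linarith

theorem NsqSet_bddBelow' {A B X Y : Type} [Fintype A] [Fintype B] (P : A → B → X → Y → ℝ)
    (x : X) (y : Y) : BddBelow (NsqSet P x y) := by
  refine ⟨-(Fintype.card (A × B) * (1 / Real.log 2)), ?_⟩
  rintro r ⟨n, p, Pe, hp, hs, hd, -, rfl⟩
  calc -(Fintype.card (A × B) * (1 / Real.log 2))
      = ∑ i, p i * -(Fintype.card (A × B) * (1 / Real.log 2)) := by
        rw [← Finset.sum_mul, hs, one_mul]
    _ ≤ _ := Finset.sum_le_sum fun i _ =>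
        mul_le_mul_of_nonneg_left (mutInfo_ge' _ (hd i) x y) (hp i)

theorem NsqSet_nonempty' {A B X Y : Type} [Fintype A] [Fintype B] (P : A → B → X → Y → ℝ)
    (hP : IsDevice P) (x : X) (y : Y) : (NsqSet P x y).Nonempty :=
  ⟨_, 1, fun _ => 1, fun _ => P, by simp, by simp, fun _ => hP, by simp, rfl⟩

theorem NsqSet_mix' {A B X Y : Type} [Fintype A] [Fintype B] (P R : A → B → X → Y → ℝ)
    (t : ℝ) (ht0 : 0 ≤ t) (ht1 : t ≤ 1) (x : X) (y : Y) (r s : ℝ)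
    (hr : r ∈ NsqSet P x y) (hs : s ∈ NsqSet R x y) :
    t * r + (1 - t) * s ∈ NsqSet (fun a b x y => t * P a b x y + (1 - t) * R a b x y) x y := by
  obtain ⟨n, p, Pe, hp, hps, hpd, hpe, rfl⟩ := hr
  obtain ⟨m, q, Re, hq, hqs, hqd, hqe, rfl⟩ := hs
  refine ⟨n + m, Fin.append (fun i => t * p i) (fun i => (1 - t) * q i), Fin.append Pe Re,
    ?_, ?_, ?_, ?_, ?_⟩
  · intro i
    refine Fin.addCases (fun i => ?_) (fun i => ?_) i
    · simpa using mul_nonneg ht0 (hp i)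
    · simpa using mul_nonneg (sub_nonneg.2 ht1) (hq i)
  · simp [Fin.sum_univ_add, ← Finset.mul_sum, hps, hqs]
  · intro i
    refine Fin.addCases (fun i => ?_) (fun i => ?_) i
    · simpa using hpd i
    · simpa using hqd i
  · intro a b x' y'
    simp [Fin.sum_univ_add, mul_assoc, ← Finset.mul_sum, hpe, hqe]
  · simp [Fin.sum_univ_add, mul_assoc, ← Finset.mul_sum]

/-- The squashed non-locality is convex with respect to mixtures of devices. -/
theorem Nsq_convex {A B X Y : Type} [Fintype A] [Fintype B] [Fintype X] [Fintype Y]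
    [Nonempty X] [Nonempty Y]
    (P R : A → B → X → Y → ℝ) (hP : IsDevice P) (hR : IsDevice R)
    (t : ℝ) (ht0 : 0 ≤ t) (ht1 : t ≤ 1) :
    Nsq (fun a b x y => t * P a b x y + (1 - t) * R a b x y) ≤
      t * Nsq P + (1 - t) * Nsq R := by
  have h1t : 0 ≤ 1 - t := sub_nonneg.2 ht1
  unfold Nsq
  refine Finset.sup'_le _ _ fun xy _ => ?_
  have hA := Finset.le_sup' (fun xy : X × Y => sInf (NsqSet P xy.1 xy.2)) (Finset.mem_univ xy)
  have hB := Finset.le_sup' (fun xy : X × Y => sInf (NsqSet R xy.1 xy.2)) (Finset.mem_univ xy)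
  refine le_trans ?_ (add_le_add (mul_le_mul_of_nonneg_left hA ht0)
    (mul_le_mul_of_nonneg_left hB h1t))
  refine le_of_forall_pos_le_add fun ε hε => ?_
  obtain ⟨r, hr, hr'⟩ := exists_lt_of_csInf_lt (NsqSet_nonempty' P hP xy.1 xy.2)
    (lt_add_of_pos_right _ hε)
  obtain ⟨s, hs, hs'⟩ := exists_lt_of_csInf_lt (NsqSet_nonempty' R hR xy.1 xy.2)
    (lt_add_of_pos_right _ hε)
  have h := csInf_le (NsqSet_bddBelow' _ _ _) (NsqSet_mix' P R t ht0 ht1 xy.1 xy.2 r s hr hs)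
  have k1 := mul_le_mul_of_nonneg_left hr'.le ht0
  have k2 := mul_le_mul_of_nonneg_left hs'.le h1t
  refine h.trans ?_
  linarith
end

section
/- Subextensivity: for every bipartite non-signaling device P over finite sets A, B, X, Y, the squashed non-locality satisfies N_sq(P) <= log2(min(|A|, |B|)). -/
lemma shannonEnt_le_card {α : Type} [Fintype α] (p : α → ℝ) (h0 : ∀ a, 0 ≤ p a)
    (h1 : ∑ a, p a = 1) : shannonEnt p ≤ Real.logb 2 (Fintype.card α) := by
  have hne : Nonempty α := by
    by_contra h
    rw [not_nonempty_iff] at h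
    simp at h1
  have hn : (0 : ℝ) < Fintype.card α := by exact_mod_cast Fintype.card_pos
  have key : ∀ a, -(p a * Real.log (p a)) - p a * Real.log (Fintype.card α)
      ≤ 1 / Fintype.card α - p a := by
    intro a
    rcases (h0 a).eq_or_lt with h | h
    · rw [← h]; simp
    · have h2 := Real.log_le_sub_one_of_pos (x := 1 / (Fintype.card α * p a)) (by positivity)
      rw [one_div, Real.log_inv, Real.log_mul hn.ne' h.ne'] at h2
      have h3 := mul_le_mul_of_nonneg_left h2 h.le
      have h4 : p a * (((Fintype.card α : ℝ) * p a)⁻¹ - 1) = 1 / Fintype.card α - p a := by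
        field_simp
      rw [h4] at h3
      linarith
  have hs := Finset.sum_le_sum (fun a (_ : a ∈ Finset.univ) => key a)
  rw [Finset.sum_sub_distrib, Finset.sum_sub_distrib, ← Finset.sum_mul, h1] at hs
  simp only [Finset.sum_const, Finset.card_univ, nsmul_eq_mul, Finset.sum_neg_distrib] at hs
  rw [mul_one_div_cancel hn.ne'] at hs
  have hl : 0 < Real.log 2 := Real.log_pos (by norm_num)
  unfold shannonEnt Real.logb
  simp only [← mul_div_assoc]
  rw [← Finset.sum_div, ← neg_div]
  gcongr
  linarith

lemma sum_mul_logb_mono {α β : Type} [Fintype α] [Fintype β] (R : α → β → ℝ)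
    (h0 : ∀ a b, 0 ≤ R a b) :
    ∑ a, ∑ b, R a b * Real.logb 2 (R a b) ≤
      ∑ a, (∑ b, R a b) * Real.logb 2 (∑ b, R a b) := by
  refine Finset.sum_le_sum fun a _ => ?_
  rw [Finset.sum_mul]
  refine Finset.sum_le_sum fun b _ => ?_
  rcases (h0 a b).eq_or_lt with h | h
  · rw [← h]; simp
  · refine mul_le_mul_of_nonneg_left ?_ h.le
    exact Real.logb_le_logb_of_le (by norm_num) h
      (Finset.single_le_sum (f := fun b => R a b) (fun b _ => h0 a b) (Finset.mem_univ b))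

lemma mutInfo_le {α β : Type} [Fintype α] [Fintype β] (R : α → β → ℝ)
    (h0 : ∀ a b, 0 ≤ R a b) (h1 : ∑ a, ∑ b, R a b = 1) :
    mutInfo R ≤ Real.logb 2 ((min (Fintype.card α) (Fintype.card β) : ℕ) : ℝ) := by
  have hA := shannonEnt_le_card (fun a => ∑ b, R a b)
    (fun a => Finset.sum_nonneg fun b _ => h0 a b) h1
  have hB := shannonEnt_le_card (fun b => ∑ a, R a b)
    (fun b => Finset.sum_nonneg fun a _ => h0 a b) (by rw [Finset.sum_comm]; exact h1)
  have mA := sum_mul_logb_mono R h0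
  have mB := sum_mul_logb_mono (fun b a => R a b) (fun b a => h0 a b)
  have eA : shannonEnt (fun p : α × β => R p.1 p.2) =
      -∑ a, ∑ b, R a b * Real.logb 2 (R a b) := by
    simp only [shannonEnt, Fintype.sum_prod_type]
  have eB : shannonEnt (fun p : α × β => R p.1 p.2) =
      -∑ b, ∑ a, R a b * Real.logb 2 (R a b) := by
    rw [eA, Finset.sum_comm]
  have dA : shannonEnt (fun a => ∑ b, R a b) =
      -∑ a, (∑ b, R a b) * Real.logb 2 (∑ b, R a b) := rfl
  have dB : shannonEnt (fun b => ∑ a, R a b) =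
      -∑ b, (∑ a, R a b) * Real.logb 2 (∑ a, R a b) := rfl
  unfold mutInfo
  rcases min_choice (Fintype.card α) (Fintype.card β) with h | h <;> rw [h] <;> linarith

/-- Subextensivity: the squashed non-locality of a bipartite non-signaling device is at
most `log₂(min(|A|, |B|))`. -/
theorem Nsq_subextensive {A B X Y : Type} [Fintype A] [Fintype B] [Fintype X] [Fintype Y]
    [Nonempty X] [Nonempty Y]
    (P : A → B → X → Y → ℝ) (hP : IsDevice P) :
    Nsq P ≤ Real.logb 2 ((min (Fintype.card A) (Fintype.card B) : ℕ) : ℝ) := by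
  unfold Nsq
  refine Finset.sup'_le _ _ fun xy _ => ?_
  obtain ⟨x, y⟩ := xy
  by_cases hb : BddBelow (NsqSet P x y)
  · refine le_trans (csInf_le hb ?_)
      (mutInfo_le (fun a b => P a b x y) (fun a b => hP.1 a b x y) (hP.2.1 x y))
    exact ⟨1, fun _ => 1, fun _ => P, by simp, by simp, fun _ => hP, by simp, by simp⟩
  · rw [Real.sInf_of_not_bddBelow hb]
    have h1 := hP.2.1 x y
    have hA : Nonempty A := by
      by_contra h
      rw [not_nonempty_iff] at h
      simp at h1
    have hB : Nonempty B := by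
      by_contra h
      rw [not_nonempty_iff] at h
      simp at h1
    refine Real.logb_nonneg (by norm_num) ?_
    have : 1 ≤ min (Fintype.card A) (Fintype.card B) :=
      le_min Fintype.card_pos Fintype.card_pos
    exact_mod_cast this
end

section
/- Pinsker-Fano secrecy bound: let K and T be finite sets with |K| >= 2 and let P be a probability distribution on K x K x T with coordinates (S_A, S, T). Suppose I(S : T)_P <= epsilon, Pr[S_A != S] := sum over triples with s_A != s of P(s_A,s,t) <= epsilon, and 0 <= epsilon <= 1/2. Then (1/2) * sum over (s_A,s,t) of | P(s_A,s,t) - P_{S_A S}(s_A,s) * P_T(t) | <= (1/sqrt(2)) * sqrt( epsilon + h(epsilon) + epsilon * log2(|K| - 1) ), where P_{S_A S} and P_T are the indicated marginals of P. -/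
/-- The binary Shannon entropy `h(ε) = -ε log₂ ε - (1-ε) log₂ (1-ε)` (with `h(0)=0`). -/
noncomputable def binEnt (x : ℝ) : ℝ :=
  -(x * Real.logb 2 x) - (1 - x) * Real.logb 2 (1 - x)


lemma hasDeriv_aux (x : ℝ) (hx : 0 < x) :
    HasDerivAt (fun x : ℝ => Real.log x - (5*x^2-4*x-1)/(2*x^2+4*x))
      ((x-1)^3/(x^2*(x+2)^2)) x := by
  have h1 : HasDerivAt (fun x : ℝ => 5*x^2-4*x-1) (10*x-4) x := by
    have := (((hasDerivAt_pow 2 x).const_mul 5).sub ((hasDerivAt_id x).const_mul 4)).sub_const 1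
    refine this.congr_deriv ?_
    norm_num; try ring
  have h2 : HasDerivAt (fun x : ℝ => 2*x^2+4*x) (4*x+4) x := by
    have := ((hasDerivAt_pow 2 x).const_mul 2).add ((hasDerivAt_id x).const_mul 4)
    refine this.congr_deriv ?_
    norm_num; try ring
  have hne : 2*x^2+4*x ≠ 0 := by positivity
  have := (Real.hasDerivAt_log hx.ne').sub (h1.div h2 hne)
  refine this.congr_deriv ?_
  have : x + 2 ≠ 0 := by positivity
  have e : 2*x^2+4*x = 2*x*(x+2) := by ring
  rw [e]
  field_simp
  ring

lemma log_lower (x : ℝ) (hx : 0 < x) : (5*x^2-4*x-1)/(2*x^2+4*x) ≤ Real.log x := by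
  set f := fun x : ℝ => Real.log x - (5*x^2-4*x-1)/(2*x^2+4*x) with hf
  have f1 : f 1 = 0 := by simp [hf]; norm_num
  suffices f 1 ≤ f x by rw [f1] at this; simp only [hf] at this; linarith
  rcases le_total x 1 with h | h
  · have : AntitoneOn f (Set.Icc x 1) := by
      apply antitoneOn_of_deriv_nonpos (convex_Icc _ _)
      · intro y hy
        exact (hasDeriv_aux y (by linarith [hy.1])).continuousAt.continuousWithinAt
      · intro y hy
        rw [interior_Icc] at hy
        exact (hasDeriv_aux y (by linarith [hy.1])).differentiableAt.differentiableWithinAt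
      · intro y hy
        rw [interior_Icc] at hy
        rw [(hasDeriv_aux y (by linarith [hy.1])).deriv]
        apply div_nonpos_of_nonpos_of_nonneg _ (by positivity)
        have : y - 1 ≤ 0 := by linarith [hy.2]
        nlinarith [sq_nonneg (y-1)]
    exact this ⟨le_rfl, h⟩ ⟨h, le_rfl⟩ h
  · have : MonotoneOn f (Set.Icc 1 x) := by
      apply monotoneOn_of_deriv_nonneg (convex_Icc _ _)
      · intro y hy
        exact (hasDeriv_aux y (by linarith [hy.1])).continuousAt.continuousWithinAt
      · intro y hy
        rw [interior_Icc] at hy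
        exact (hasDeriv_aux y (by linarith [hy.1])).differentiableAt.differentiableWithinAt
      · intro y hy
        rw [interior_Icc] at hy
        rw [(hasDeriv_aux y (by linarith [hy.1])).deriv]
        have : 0 ≤ y - 1 := by linarith [hy.1]
        positivity
    exact this ⟨le_rfl, h⟩ ⟨h, le_rfl⟩ h

lemma pinsker_pointwise (p q : ℝ) (hp : 0 ≤ p) (hq : 0 ≤ q) (h : q = 0 → p = 0) :
    3 * |p - q|^2 ≤ (2*p+4*q) * (p * Real.log (p/q) - p + q) := by
  rw [sq_abs]
  rcases hq.eq_or_lt with h0 | hq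
  · simp [h h0.symm, ← h0]
  rcases hp.eq_or_lt with h0 | hp
  · simp [← h0]; nlinarith
  have := log_lower (p/q) (by positivity)
  have e : (5*(p/q)^2-4*(p/q)-1)/(2*(p/q)^2+4*(p/q)) = (5*p^2-4*p*q-q^2)/(p*(2*p+4*q)) := by
    field_simp
  rw [e, div_le_iff₀ (by positivity)] at this
  nlinarith

lemma pinsker {ι : Type*} [Fintype ι] (p q : ι → ℝ) (hp : ∀ i, 0 ≤ p i) (hq : ∀ i, 0 ≤ q i)
    (h : ∀ i, q i = 0 → p i = 0) (sp : ∑ i, p i = 1) (sq : ∑ i, q i = 1) :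
    (∑ i, |p i - q i|)^2 ≤ 2 * ∑ i, p i * Real.log (p i / q i) := by
  have key := fun i => pinsker_pointwise (p i) (q i) (hp i) (hq i) (h i)
  have hw : ∀ i, 0 ≤ 2 * p i + 4 * q i := fun i => by linarith [hp i, hq i]
  have hφ : ∀ i, 0 ≤ p i * Real.log (p i / q i) - p i + q i := by
    intro i
    rcases (hw i).eq_or_lt with h0 | h0
    · have h1 : p i = 0 := by linarith [hp i, hq i]
      have h2 : q i = 0 := by linarith [hp i, hq i]
      simp [h1, h2]
    · have := key i
      by_contra hn
      push Not at hn
      nlinarith [sq_nonneg |p i - q i|]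
  have cs := Finset.sum_sq_le_sum_mul_sum_of_sq_le_mul Finset.univ
    (r := fun i => |p i - q i|) (f := fun i => 2 * p i + 4 * q i)
    (g := fun i => (p i * Real.log (p i / q i) - p i + q i) / 3)
    (fun i _ => hw i) (fun i _ => by have := hφ i; positivity)
    (fun i _ => by have := key i; linarith)
  rw [Finset.sum_add_distrib, ← Finset.mul_sum, ← Finset.mul_sum, ← Finset.sum_div,
    Finset.sum_add_distrib, Finset.sum_sub_distrib, sp, sq] at cs
  linarith

lemma gibbs_pointwise (q m w : ℝ) (hq : 0 ≤ q) (hm : q ≤ m) (hw : 0 ≤ w) (h : w = 0 → q = 0) :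
    q * (Real.log m - Real.log q) ≤ -(q * Real.log w) + m * w - q := by
  rcases hq.eq_or_lt with h0 | hq
  · rw [← h0]; simp; exact mul_nonneg (by linarith) hw
  have hw' : 0 < w := lt_of_le_of_ne hw (fun e => hq.ne' (h e.symm))
  have hm' : 0 < m := by linarith
  have := Real.log_le_sub_one_of_pos (show 0 < m*w/q by positivity)
  rw [Real.log_div (by positivity) (by positivity), Real.log_mul (by positivity) (by positivity)] at this
  have h2 := mul_le_mul_of_nonneg_left this hq.le
  have e : q * (m*w/q - 1) = m*w - q := by field_simp
  rw [e] at h2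
  linarith

lemma fano {K : Type} [Fintype K] [DecidableEq K] (hK : 2 ≤ Fintype.card K)
    (Q : K → K → ℝ) (hQ : ∀ a s, 0 ≤ Q a s) (sQ : ∑ a, ∑ s, Q a s = 1)
    (ε : ℝ) (hε0 : 0 ≤ ε) (hε : ε ≤ 1/2)
    (herr : ∑ a, ∑ s, (if a = s then (0 : ℝ) else Q a s) ≤ ε) :
    ∑ a, ∑ s, Q a s * (Real.log (∑ a', Q a' s) - Real.log (Q a s)) ≤
      -(ε * Real.log ε) - (1-ε) * Real.log (1-ε) + ε * Real.log ((Fintype.card K : ℝ) - 1) := by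
  have hn : (1:ℝ) ≤ (Fintype.card K : ℝ) - 1 := by
    have : (2:ℝ) ≤ Fintype.card K := by exact_mod_cast hK
    linarith
  set n := (Fintype.card K : ℝ) - 1 with hndef
  set W : K → K → ℝ := fun a s => if a = s then 1 - ε else ε / n with hW
  have hz : ε = 0 → ∀ a s, a ≠ s → Q a s = 0 := by
    intro h0 a s has
    have nn : ∀ a s, 0 ≤ (if a = s then (0 : ℝ) else Q a s) := by
      intro a s; split_ifs; exacts [le_rfl, hQ a s]
    have h1 : (if a = s then (0 : ℝ) else Q a s) ≤ ∑ s, (if a = s then (0 : ℝ) else Q a s) :=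
      Finset.single_le_sum (f := fun s => (if a = s then (0 : ℝ) else Q a s))
        (fun s _ => nn a s) (Finset.mem_univ s)
    have h2 : ∑ s, (if a = s then (0 : ℝ) else Q a s) ≤
        ∑ a, ∑ s, (if a = s then (0 : ℝ) else Q a s) :=
      Finset.single_le_sum (f := fun a => ∑ s, (if a = s then (0 : ℝ) else Q a s))
        (fun a _ => Finset.sum_nonneg (fun s _ => nn a s)) (Finset.mem_univ a)
    rw [if_neg has] at h1
    linarith [hQ a s]
  have hWs : ∀ s, ∑ a, W a s = 1 := by
    intro s
    have : ∀ a, W a s = ε / n + (if a = s then (1 - ε - ε/n) else 0) := by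
      intro a; simp only [hW]; split_ifs <;> ring
    simp only [this, Finset.sum_add_distrib, Finset.sum_ite_eq', Finset.sum_const,
      Finset.card_univ, Finset.mem_univ, if_true, nsmul_eq_mul]
    have : (Fintype.card K : ℝ) = n + 1 := by rw [hndef]; ring
    rw [this]
    field_simp
    ring
  have sm : ∑ a, ∑ s, (∑ a', Q a' s) * W a s = 1 := by
    rw [Finset.sum_comm]
    simp only [← Finset.mul_sum, hWs, mul_one]
    rw [Finset.sum_comm, sQ]
  set L := Real.log (1-ε) - Real.log (ε / n) with hL
  have pt : ∀ a s, Q a s * (Real.log (∑ a', Q a' s) - Real.log (Q a s)) ≤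
      Q a s * (-Real.log (1-ε)) + (if a = s then (0 : ℝ) else Q a s) * L
        + (∑ a', Q a' s) * W a s - Q a s := by
    intro a s
    have := gibbs_pointwise (Q a s) (∑ a', Q a' s) (W a s) (hQ a s)
      (Finset.single_le_sum (f := fun a => Q a s) (fun a _ => hQ a s) (Finset.mem_univ a))
      (by simp only [hW]; split_ifs; linarith; positivity)
      (by
        simp only [hW]; split_ifs with has
        · intro; linarith
        · intro h0
          refine hz ?_ a s has
          rcases div_eq_zero_iff.1 h0 with h | h
          · exact h
          · linarith)
    refine this.trans (le_of_eq ?_)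
    simp only [hW, hL]
    split_ifs <;> ring
  refine (Finset.sum_le_sum fun a _ => Finset.sum_le_sum fun s _ => pt a s).trans ?_
  simp only [Finset.sum_sub_distrib, Finset.sum_add_distrib, sm, ← Finset.sum_mul, sQ]
  have hL0 : 0 ≤ L := by
    rcases hε0.eq_or_lt with h | h
    · simp [hL, ← h]
    · rw [hL, sub_nonneg]
      apply Real.log_le_log (by positivity)
      have : ε / n ≤ ε := div_le_self hε0 hn
      linarith
  have h1 := mul_le_mul_of_nonneg_right herr hL0
  have h2 : ε * L = ε * Real.log (1-ε) - ε * Real.log ε + ε * Real.log n := by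
    rcases hε0.eq_or_lt with h | h
    · simp [← h]
    · rw [hL, Real.log_div h.ne' (by linarith)]; ring
  linarith

lemma log_two_mul_shannonEnt {α : Type} [Fintype α] (p : α → ℝ) :
    Real.log 2 * shannonEnt p = -∑ a, p a * Real.log (p a) := by
  have : Real.log 2 ≠ 0 := (Real.log_pos (by norm_num)).ne'
  unfold shannonEnt
  rw [mul_neg, Finset.mul_sum]
  congr 1
  refine Finset.sum_congr rfl fun a _ => ?_
  rw [Real.logb]; field_simp

lemma kl_bound {K T : Type} [Fintype K] [Fintype T]
    (P : K → K → T → ℝ) (hP : ∀ a s t, 0 ≤ P a s t) :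
    ∑ a, ∑ s, ∑ t, P a s t * Real.log (P a s t /
        ((∑ t', P a s t') * (∑ a', ∑ s', P a' s' t))) ≤
      Real.log 2 * mutInfo (fun s t => ∑ a, P a s t) +
      ∑ a, ∑ s, (∑ t, P a s t) * (Real.log (∑ a', ∑ t, P a' s t) - Real.log (∑ t, P a s t)) := by
  have pt : ∀ a s t, P a s t * Real.log (P a s t /
        ((∑ t', P a s t') * (∑ a', ∑ s', P a' s' t))) ≤
      P a s t * Real.log (∑ a', P a' s t) - P a s t * Real.log (∑ t', ∑ a', P a' s t')
       - P a s t * Real.log (∑ s', ∑ a', P a' s' t) +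
      P a s t * (Real.log (∑ a', ∑ t, P a' s t) - Real.log (∑ t, P a s t)) := by
    intro a s t
    rcases (hP a s t).eq_or_lt with h | h
    · simp [← h]
    have hM : P a s t ≤ ∑ a', P a' s t :=
      Finset.single_le_sum (f := fun a => P a s t) (fun a _ => hP a s t) (Finset.mem_univ a)
    have hQ : P a s t ≤ ∑ t, P a s t :=
      Finset.single_le_sum (f := fun t => P a s t) (fun t _ => hP a s t) (Finset.mem_univ t)
    have hR : ∑ a', P a' s t ≤ ∑ s', ∑ a', P a' s' t :=
      Finset.single_le_sum (f := fun s => ∑ a', P a' s t)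
        (fun s _ => Finset.sum_nonneg fun a _ => hP a s t) (Finset.mem_univ s)
    rw [Finset.sum_comm (f := fun a' s' => P a' s' t), Finset.sum_comm (f := fun t' a' => P a' s t'),
      Real.log_div h.ne' (mul_ne_zero (by linarith) (by linarith)),
      Real.log_mul (by linarith) (by linarith)]
    have := mul_le_mul_of_nonneg_left (Real.log_le_log h hM) h.le
    linarith
  refine (Finset.sum_le_sum fun a _ => Finset.sum_le_sum fun s _ =>
    Finset.sum_le_sum fun t _ => pt a s t).trans (le_of_eq ?_)
  simp only [mutInfo, mul_sub, mul_add, log_two_mul_shannonEnt, Finset.sum_sub_distrib,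
    Finset.sum_add_distrib, Fintype.sum_prod_type, ← Finset.sum_mul]
  have e1 : ∑ a, ∑ s, ∑ t, P a s t * Real.log (∑ a', P a' s t)
      = ∑ s, ∑ t, (∑ a, P a s t) * Real.log (∑ a', P a' s t) := by
    rw [Finset.sum_comm]
    refine Finset.sum_congr rfl fun s _ => ?_
    rw [Finset.sum_comm]
    simp only [Finset.sum_mul]
  have e2 : ∑ a, ∑ s, (∑ t, P a s t) * Real.log (∑ t', ∑ a', P a' s t')
      = ∑ s, (∑ t, ∑ a, P a s t) * Real.log (∑ t', ∑ a', P a' s t') := by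
    rw [Finset.sum_comm]
    refine Finset.sum_congr rfl fun s _ => ?_
    rw [← Finset.sum_mul]
    congr 1
    rw [Finset.sum_comm]
  have e3 : ∑ a, ∑ s, ∑ t, P a s t * Real.log (∑ s', ∑ a', P a' s' t)
      = ∑ t, (∑ s, ∑ a, P a s t) * Real.log (∑ s', ∑ a', P a' s' t) := by
    rw [Finset.sum_comm]
    simp only [Finset.sum_mul]
    rw [Finset.sum_comm (s := Finset.univ (α := T))]
    refine Finset.sum_congr rfl fun s _ => ?_
    rw [Finset.sum_comm]
  rw [e1, e2, e3]
  ring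

/-- Pinsker–Fano secrecy bound: if `P` is a distribution on `K × K × T` with coordinates
`(S_A, S, T)`, `I(S:T) ≤ ε`, `Pr[S_A ≠ S] ≤ ε` and `0 ≤ ε ≤ 1/2`, then the variational
distance between `P` and the product of its `(S_A,S)`- and `T`-marginals is at most
`(1/√2)·√(ε + h(ε) + ε·log₂(|K|-1))`. -/
theorem pinsker_fano_secrecy_bound {K T : Type} [Fintype K] [Fintype T] [DecidableEq K]
    (hK : 2 ≤ Fintype.card K)
    (P : K → K → T → ℝ)
    (hnonneg : ∀ sA s t, 0 ≤ P sA s t)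
    (hsum : ∑ sA, ∑ s, ∑ t, P sA s t = 1)
    (ε : ℝ) (hε0 : 0 ≤ ε) (hε : ε ≤ 1/2)
    (hI : mutInfo (fun s t => ∑ sA, P sA s t) ≤ ε)
    (herr : ∑ sA, ∑ s, ∑ t, (if sA = s then (0 : ℝ) else P sA s t) ≤ ε) :
    (1/2) * ∑ sA, ∑ s, ∑ t,
        |P sA s t - (∑ t', P sA s t') * (∑ sA', ∑ s', P sA' s' t)| ≤
      (1 / Real.sqrt 2) *
        Real.sqrt (ε + binEnt ε + ε * Real.logb 2 ((Fintype.card K : ℝ) - 1)) := by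
  set R : T → ℝ := fun t => ∑ sA', ∑ s', P sA' s' t with hR
  set Q : K → K → ℝ := fun a s => ∑ t, P a s t with hQ
  have Q0 : ∀ a s, 0 ≤ Q a s := fun a s => Finset.sum_nonneg fun t _ => hnonneg a s t
  have R0 : ∀ t, 0 ≤ R t := fun t => Finset.sum_nonneg fun a _ =>
    Finset.sum_nonneg fun s _ => hnonneg a s t
  have sR : ∑ t, R t = 1 := by
    rw [← hsum, hR, Finset.sum_comm]
    refine Finset.sum_congr rfl fun a _ => ?_
    rw [Finset.sum_comm]
  have hPQ : ∀ a s t, P a s t ≤ Q a s := fun a s t =>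
    Finset.single_le_sum (f := fun t => P a s t) (fun t _ => hnonneg a s t) (Finset.mem_univ t)
  have hPR : ∀ a s t, P a s t ≤ R t := fun a s t =>
    (Finset.single_le_sum (f := fun s => P a s t) (fun s _ => hnonneg a s t)
      (Finset.mem_univ s)).trans
    (Finset.single_le_sum (f := fun a => ∑ s, P a s t)
      (fun a _ => Finset.sum_nonneg fun s _ => hnonneg a s t) (Finset.mem_univ a))
  have pin := pinsker (ι := K × K × T) (fun i => P i.1 i.2.1 i.2.2)
    (fun i => Q i.1 i.2.1 * R i.2.2) (fun i => hnonneg _ _ _)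
    (fun i => mul_nonneg (Q0 _ _) (R0 _))
    (by
      rintro ⟨a, s, t⟩ h
      have h1 := hPQ a s t
      have h2 := hPR a s t
      have h3 := hnonneg a s t
      rcases mul_eq_zero.1 h with h | h <;> simp only at h ⊢ <;> linarith)
    (by simpa only [Fintype.sum_prod_type] using hsum)
    (by
      simp only [Fintype.sum_prod_type, ← Finset.mul_sum, sR, mul_one]
      exact hsum)
  simp only [Fintype.sum_prod_type] at pin
  have kl := kl_bound P hnonneg
  have fa := fano hK Q Q0 hsum ε hε0 hε (by
    refine le_trans (le_of_eq ?_) herr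
    refine Finset.sum_congr rfl fun a _ => Finset.sum_congr rfl fun s _ => ?_
    split_ifs <;> simp [hQ])
  have l2 : 0 < Real.log 2 := Real.log_pos (by norm_num)
  have l21 : Real.log 2 ≤ 1 := by linarith [Real.log_two_lt_d9]
  set X := ε + binEnt ε + ε * Real.logb 2 ((Fintype.card K : ℝ) - 1) with hX
  have eX : Real.log 2 * X = Real.log 2 * ε + (-(ε * Real.log ε) - (1-ε) * Real.log (1-ε)
      + ε * Real.log ((Fintype.card K : ℝ) - 1)) := by
    rw [hX, binEnt]; simp only [Real.logb]; field_simp; ring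
  have hI' := mul_le_mul_of_nonneg_left hI l2.le
  set D := ∑ a, ∑ s, ∑ t, |P a s t - Q a s * R t| with hD
  have main : D^2 ≤ 2 * (Real.log 2 * X) := by
    rw [eX]
    refine pin.trans ?_
    have := kl.trans (add_le_add hI' fa)
    linarith
  have hX0 : 0 ≤ X := by
    have : 0 ≤ Real.log 2 * X := by nlinarith [sq_nonneg D]
    exact nonneg_of_mul_nonneg_right this l2
  have main2 : D^2 ≤ 2 * X := by nlinarith
  rw [one_div (√2), ← Real.sqrt_inv, ← Real.sqrt_mul (by norm_num)]
  apply Real.le_sqrt_of_sq_le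
  linarith [show (1/2*D)^2 = D^2/4 by ring]
end
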